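/- arXiv:1608.00219 — 2 statements merged into one kernel-verified Lean document; each statement's English description precedes it below -/
import Mathlib

section
/- The function Φ(s,t) = ᵛ𝒯_s^t g(s) solves the singular hyperbolic equation ∂²Φ/∂s² + (ν/s) ∂Φ/∂s = ∂²Φ/∂t² + (ν/t) ∂Φ/∂t with initial conditions Φ(s,0) = g(s) and ∂Φ/∂t |_{t=0} = 0, whenever g ∈ C²(ℝ₊) is even. -/
open MeasureTheory Real Set Metric

noncomputable section

/-- The one-dimensional generalized translation
`ᵛ𝒯_s^t g(s) = (Γ((ν+1)/2)/(√π Γ(ν/2))) ∫_0^π g(√(s²+t²−2st cos φ)) sin^{ν−1} φ dφ`. -/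
def genT (ν : ℝ) (g : ℝ → ℝ) (s t : ℝ) : ℝ :=
  (Real.Gamma ((ν + 1) / 2) / (Real.sqrt π * Real.Gamma (ν / 2))) *
    ∫ φ in (0:ℝ)..π,
      g (Real.sqrt (s ^ 2 + t ^ 2 - 2 * s * t * Real.cos φ)) * Real.sin φ ^ (ν - 1)

/-!
Write `r = √(s² + t² - 2st cos φ)`, `h(r) = g'(r) / r` and `p(r) = g''(r) - h(r)`. Since
`r² = (s - t cos φ)² + (t sin φ)²`, the map `s ↦ g(r)` has derivatives `h(r) (s - t cos φ)` and
`h(r) + p(r) (s - t cos φ)² / r²`. Evenness of `g` makes `h` continuous with `h(0) = g''(0)`, so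
that `p(0) = 0` and both expressions stay continuous where `r` vanishes (`s = t`, `φ = 0`); one may
therefore differentiate under the integral sign for all `s` and `t`. The difference of the two
Bessel operators applied to `g(r)`, multiplied by `sin ^ (ν - 1) φ`, is then
`(s² - t²) / (s t)` times the `φ`-derivative of `h(r) sin ^ ν φ`, which integrates to zero.
-/

/-! ### The integral of a power of the sine -/

theorem integral_Ioo_rpow_mul_one_sub_rpow {α β : ℝ} (hα : 0 < α) (hβ : 0 < β) :
    ∫ x in Ioo (0 : ℝ) 1, x ^ (α - 1) * (1 - x) ^ (β - 1) = ProbabilityTheory.beta α β := by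
  have hcast : ∀ x ∈ Ioc (0 : ℝ) 1, (x : ℂ) ^ ((α : ℂ) - 1) * (1 - (x : ℂ)) ^ ((β : ℂ) - 1) =
      ((x ^ (α - 1) * (1 - x) ^ (β - 1) : ℝ) : ℂ) := fun x hx => by
    push_cast [Complex.ofReal_cpow hx.1.le, Complex.ofReal_cpow (sub_nonneg.2 hx.2)]
    rfl
  rw [ProbabilityTheory.beta_eq_betaIntegralReal α β hα hβ, Complex.betaIntegral,
    intervalIntegral.integral_of_le zero_le_one, ← integral_Ioc_eq_integral_Ioo,
    setIntegral_congr_fun measurableSet_Ioc hcast, integral_complex_ofReal, Complex.ofReal_re]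

theorem bijOn_half_one_sub_cos :
    BijOn (fun φ : ℝ => (1 - cos φ) / 2) (Ioo 0 π) (Ioo 0 1) := by
  refine ⟨fun φ hφ => ?_, fun a ha b hb hab => ?_, fun x hx => ?_⟩
  · have hlt : cos φ < 1 := by
      simpa using cos_lt_cos_of_nonneg_of_le_pi le_rfl hφ.2.le hφ.1
    have hgt : -1 < cos φ := by
      simpa using cos_lt_cos_of_nonneg_of_le_pi hφ.1.le le_rfl hφ.2
    constructor <;> linarith
  · simp only at hab
    exact injOn_cos (Ioo_subset_Icc_self ha) (Ioo_subset_Icc_self hb) (by linarith)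
  · obtain ⟨hx0, hx1⟩ := hx
    refine ⟨arccos (1 - 2 * x), ⟨arccos_pos.2 (by linarith), ?_⟩, ?_⟩
    · exact (arccos_le_pi _).lt_of_ne fun h => by linarith [arccos_eq_pi.1 h]
    · simp only
      rw [cos_arccos (by linarith) (by linarith)]
      ring

theorem integral_sin_rpow_sub_one_eq_beta {ν : ℝ} (hν : 0 < ν) :
    ∫ φ in (0 : ℝ)..π, sin φ ^ (ν - 1) =
      2 ^ (ν - 1) * ProbabilityTheory.beta (ν / 2) (ν / 2) := by
  have hderiv : ∀ φ ∈ Ioo (0 : ℝ) π,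
      HasDerivWithinAt (fun φ : ℝ => (1 - cos φ) / 2) (sin φ / 2) (Ioo 0 π) φ := fun φ _ => by
    simpa using (((hasDerivAt_cos φ).const_sub 1).div_const 2).hasDerivWithinAt
  have hpt : ∀ φ ∈ Ioo (0 : ℝ) π, sin φ ^ (ν - 1) = 2 ^ (ν - 1) * (|sin φ / 2| •
      (((1 - cos φ) / 2) ^ (ν / 2 - 1) * (1 - (1 - cos φ) / 2) ^ (ν / 2 - 1))) := fun φ hφ => by
    have hsin : 0 < sin φ / 2 := half_pos (sin_pos_of_mem_Ioo hφ)
    have hprod : (1 - cos φ) / 2 * (1 - (1 - cos φ) / 2) = (sin φ / 2) ^ (2 : ℝ) := by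
      rw [rpow_two]
      linear_combination -(1 / 4) * sin_sq_add_cos_sq φ
    calc sin φ ^ (ν - 1) = 2 ^ (ν - 1) * (sin φ / 2) ^ (1 + 2 * (ν / 2 - 1)) := by
          rw [show 1 + 2 * (ν / 2 - 1) = ν - 1 by ring, ← mul_rpow zero_le_two hsin.le,
            mul_div_cancel₀ _ two_ne_zero]
      _ = _ := by
          rw [rpow_add hsin, rpow_one, rpow_mul hsin.le, ← hprod, abs_of_pos hsin, smul_eq_mul,
            mul_rpow] <;> linarith [cos_le_one φ, neg_one_le_cos φ]
  rw [intervalIntegral.integral_of_le pi_pos.le, integral_Ioc_eq_integral_Ioo,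
    setIntegral_congr_fun measurableSet_Ioo hpt, integral_const_mul,
    ← integral_image_eq_integral_abs_deriv_smul measurableSet_Ioo hderiv
      bijOn_half_one_sub_cos.injOn fun x => x ^ (ν / 2 - 1) * (1 - x) ^ (ν / 2 - 1),
    bijOn_half_one_sub_cos.image_eq,
    integral_Ioo_rpow_mul_one_sub_rpow (half_pos hν) (half_pos hν)]

theorem integral_sin_rpow_sub_one_eq_Gamma {ν : ℝ} (hν : 0 < ν) :
    ∫ φ in (0 : ℝ)..π, sin φ ^ (ν - 1) =
      √π * Real.Gamma (ν / 2) / Real.Gamma ((ν + 1) / 2) := by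
  have hΓ : 0 < Real.Gamma ν := Real.Gamma_pos_of_pos hν
  have hΓ_half : 0 < Real.Gamma ((ν + 1) / 2) := Real.Gamma_pos_of_pos (by linarith)
  have hdup : Real.Gamma (ν / 2) * Real.Gamma ((ν + 1) / 2) =
      Real.Gamma ν * 2 ^ (1 - ν) * √π := by
    simpa [add_div, mul_div_cancel₀] using Real.Gamma_mul_Gamma_add_half (ν / 2)
  have hpow : (2 : ℝ) ^ (ν - 1) * 2 ^ (1 - ν) = 1 := by
    rw [← rpow_add two_pos]
    simp
  rw [integral_sin_rpow_sub_one_eq_beta hν, ProbabilityTheory.beta, add_halves, ← mul_div_assoc,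
    div_eq_div_iff hΓ.ne' hΓ_half.ne']
  linear_combination 2 ^ (ν - 1) * Real.Gamma (ν / 2) * hdup +
    Real.Gamma (ν / 2) * Real.Gamma ν * √π * hpow

theorem integral_sin_rpow_sub_one_pos {ν : ℝ} (hν : 0 < ν) :
    0 < ∫ φ in (0 : ℝ)..π, sin φ ^ (ν - 1) := by
  rw [integral_sin_rpow_sub_one_eq_Gamma hν]
  exact div_pos (mul_pos (sqrt_pos.2 pi_pos) (Real.Gamma_pos_of_pos (half_pos hν)))
    (Real.Gamma_pos_of_pos (by linarith))

theorem intervalIntegrable_sin_rpow_sub_one {ν : ℝ} (hν : 0 < ν) :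
    IntervalIntegrable (fun φ => sin φ ^ (ν - 1)) volume 0 π :=
  intervalIntegral.intervalIntegrable_of_integral_ne_zero (integral_sin_rpow_sub_one_pos hν).ne'

theorem intervalIntegrable_mul_sin_rpow_sub_one {ν : ℝ} (hν : 0 < ν) {f : ℝ → ℝ}
    (hf : Continuous f) :
    IntervalIntegrable (fun φ => f φ * sin φ ^ (ν - 1)) volume 0 π :=
  (intervalIntegrable_sin_rpow_sub_one hν).continuousOn_mul hf.continuousOn

/-! ### Continuity and differentiation lemmas -/

theorem hasDerivAt_integral_mul_weight {F F' : ℝ → ℝ → ℝ} {w : ℝ → ℝ} {μ : Measure ℝ} {a b : ℝ}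
    (hw : IntervalIntegrable w μ a b) (hF : ∀ x φ, HasDerivAt (fun y => F y φ) (F' x φ) x)
    (hFc : ∀ x, Continuous (F x)) (hF'c : Continuous ↿F') (x : ℝ) :
    HasDerivAt (fun y => ∫ φ in a..b, F y φ * w φ ∂μ) (∫ φ in a..b, F' x φ * w φ ∂μ) x := by
  obtain ⟨C, hC⟩ := ((isCompact_closedBall x 1).prod (isCompact_uIcc (a := a) (b := b)))
    |>.exists_bound_of_continuousOn hF'c.continuousOn
  have hF'x : Continuous (F' x) := hF'c.comp (Continuous.prodMk_right x)
  refine (intervalIntegral.hasDerivAt_integral_of_dominated_loc_of_deriv_le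
    (F' := fun y φ => F' y φ * w φ) (bound := fun φ => C * ‖w φ‖)
    (closedBall_mem_nhds x one_pos) ?_ (hw.continuousOn_mul (hFc x).continuousOn)
    (hF'x.aestronglyMeasurable.mul hw.def'.aestronglyMeasurable) ?_ (hw.norm.const_mul C) ?_).2
  · exact .of_forall fun y => (hFc y).aestronglyMeasurable.mul hw.def'.aestronglyMeasurable
  · refine .of_forall fun φ hφ y hy => ?_
    rw [norm_mul]
    exact mul_le_mul_of_nonneg_right (hC (y, φ) ⟨hy, uIoc_subset_uIcc hφ⟩) (norm_nonneg _)
  · exact .of_forall fun φ _ y _ => (hF y φ).mul_const _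

theorem continuous_mul_div_of_abs_le {X : Type*} [TopologicalSpace X] {f a ρ : X → ℝ}
    (hf : Continuous f) (ha : Continuous a) (hρ : Continuous ρ) (hle : ∀ x, |a x| ≤ ρ x)
    (hzero : ∀ x, ρ x = 0 → f x = 0) : Continuous fun x => f x * (a x / ρ x) := by
  refine continuous_iff_continuousAt.2 fun x => ?_
  by_cases hx : ρ x = 0
  · have hbound : ∀ y, ‖f y * (a y / ρ y)‖ ≤ |f y| := fun y => by
      rw [norm_mul, norm_div]
      exact mul_le_of_le_one_right (abs_nonneg _)
        (div_le_one_of_le₀ ((hle y).trans (le_abs_self _)) (abs_nonneg _))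
    have hlim := (hf.tendsto x).abs
    rw [hzero x hx, abs_zero] at hlim
    simpa only [ContinuousAt, hzero x hx, zero_mul] using squeeze_zero_norm hbound hlim
  · exact hf.continuousAt.mul (ha.continuousAt.div hρ.continuousAt hx)

theorem hasDerivAt_comp_sqrt_sq_add_sq {f : ℝ → ℝ} {f' x y : ℝ} (hr : x ^ 2 + y ^ 2 ≠ 0)
    (hf : HasDerivAt f f' √(x ^ 2 + y ^ 2)) :
    HasDerivAt (fun x => f √(x ^ 2 + y ^ 2)) (f' * (x / √(x ^ 2 + y ^ 2))) x := by
  have hsqrt := ((hasDerivAt_pow 2 x).add_const (y ^ 2)).sqrt hr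
  refine (hf.comp x hsqrt).congr_deriv ?_
  rw [Nat.cast_two, pow_one, mul_div_mul_left _ _ two_ne_zero]

/-! ### Even functions and their radial derivative -/

theorem even_apply_abs {α β : Type*} [AddGroup α] [LinearOrder α] {g : α → β}
    (heven : Function.Even g) (x : α) : g |x| = g x := by
  rcases abs_choice x with h | h <;> simp only [h, heven x]

section Deriv

variable {𝕜 E : Type*} [NontriviallyNormedField 𝕜] [NormedAddCommGroup E] [NormedSpace 𝕜 E]
  {g : 𝕜 → E}

theorem odd_deriv_of_even (heven : Function.Even g) : Function.Odd (deriv g) := fun x => by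
  have h := deriv_comp_neg g x
  rw [funext heven] at h
  rw [h, neg_neg]

theorem even_deriv_of_odd (hodd : Function.Odd g) : Function.Even (deriv g) := fun x => by
  have h := deriv_comp_neg g x
  rw [funext hodd, deriv.fun_neg, neg_inj] at h
  exact h.symm

end Deriv

/-- The difference quotient `(g'(r) - g'(0)) / r`, extended by the value `g''(0)` at `r = 0`. For
even `g` one has `g'(0) = 0`, and this is the radial derivative `g'(r) / r`. -/
def radialDeriv (g : ℝ → ℝ) : ℝ → ℝ := dslope (deriv g) 0

/-- For even `g`, the difference `g''(r) - g'(r) / r`, which is `r` times the derivative of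
`radialDeriv g`. -/
def radialDefect (g : ℝ → ℝ) (r : ℝ) : ℝ := deriv (deriv g) r - radialDeriv g r

theorem radialDefect_zero (g : ℝ → ℝ) : radialDefect g 0 = 0 := by
  simp [radialDefect, radialDeriv]

section Even

variable {g : ℝ → ℝ}

theorem radialDeriv_mul_self (heven : Function.Even g) (r : ℝ) :
    radialDeriv g r * r = deriv g r := by
  simpa [radialDeriv, mul_comm r] using
    sub_smul_dslope_of_zero (odd_deriv_of_even heven).map_zero r

theorem even_radialDeriv (heven : Function.Even g) : Function.Even (radialDeriv g) := fun r => by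
  rcases eq_or_ne r 0 with rfl | hr
  · simp
  · refine mul_right_cancel₀ hr ?_
    linear_combination -radialDeriv_mul_self heven (-r) - radialDeriv_mul_self heven r -
      odd_deriv_of_even heven r

theorem even_radialDefect (heven : Function.Even g) : Function.Even (radialDefect g) := fun r => by
  simp only [radialDefect, even_radialDeriv heven r,
    even_deriv_of_odd (odd_deriv_of_even heven) r]

theorem contDiff_one_deriv (hg : ContDiff ℝ 2 g) : ContDiff ℝ 1 (deriv g) :=
  ContDiff.deriv' (n := 1) hg

theorem continuous_radialDeriv (hg : ContDiff ℝ 2 g) : Continuous (radialDeriv g) := by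
  have hg' := contDiff_one_deriv hg
  exact continuousOn_univ.1 <| (continuousOn_dslope Filter.univ_mem).2
    ⟨hg'.continuous.continuousOn, hg'.differentiable_one 0⟩

theorem continuous_radialDefect (hg : ContDiff ℝ 2 g) : Continuous (radialDefect g) :=
  ((contDiff_one_deriv hg).continuous_deriv_one).sub (continuous_radialDeriv hg)

theorem hasDerivAt_radialDeriv (hg : ContDiff ℝ 2 g) (heven : Function.Even g) {r : ℝ}
    (hr : r ≠ 0) : HasDerivAt (radialDeriv g) (radialDefect g r / r) r := by
  have hquot := (((contDiff_one_deriv hg).differentiable_one r).hasDerivAt).fun_div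
    (hasDerivAt_id' r) hr
  refine (hquot.congr_of_eventuallyEq ?_).congr_deriv ?_
  · filter_upwards [isOpen_ne.mem_nhds hr] with x hx
    exact eq_div_of_mul_eq hx (radialDeriv_mul_self heven x)
  · rw [← radialDeriv_mul_self heven r, radialDefect]
    field_simp

theorem hasDerivAt_radial (hg : ContDiff ℝ 2 g) (heven : Function.Even g) (x y : ℝ) :
    HasDerivAt (fun x => g √(x ^ 2 + y ^ 2)) (radialDeriv g √(x ^ 2 + y ^ 2) * x) x := by
  have hderiv (z : ℝ) : HasDerivAt g (deriv g z) z :=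
    (hg.differentiable two_ne_zero z).hasDerivAt
  rcases eq_or_ne y 0 with rfl | hy
  · simpa [sqrt_sq_eq_abs, even_apply_abs heven, even_apply_abs (even_radialDeriv heven),
      radialDeriv_mul_self heven] using hderiv x
  · refine (hasDerivAt_comp_sqrt_sq_add_sq (by positivity) (hderiv _)).congr_deriv ?_
    rw [← radialDeriv_mul_self heven]
    field_simp

theorem hasDerivAt_radialDeriv_mul (hg : ContDiff ℝ 2 g) (heven : Function.Even g) (x y : ℝ) :
    HasDerivAt (fun x => radialDeriv g √(x ^ 2 + y ^ 2) * x)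
      (radialDeriv g √(x ^ 2 + y ^ 2) + radialDefect g √(x ^ 2 + y ^ 2) *
        (x / √(x ^ 2 + y ^ 2)) * (x / √(x ^ 2 + y ^ 2))) x := by
  rcases eq_or_ne y 0 with rfl | hy
  · simp only [ne_eq, OfNat.ofNat_ne_zero, not_false_eq_true, zero_pow, add_zero, sqrt_sq_eq_abs,
      even_apply_abs (even_radialDeriv heven), even_apply_abs (even_radialDefect heven),
      radialDeriv_mul_self heven]
    refine ((contDiff_one_deriv hg).differentiable_one x).hasDerivAt.congr_deriv ?_
    rcases eq_or_ne x 0 with rfl | hx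
    · simp [radialDefect, radialDeriv]
    · rw [mul_assoc, div_mul_div_comm, abs_mul_abs_self, div_self (mul_ne_zero hx hx), radialDefect]
      ring
  · have hr : √(x ^ 2 + y ^ 2) ≠ 0 := by positivity
    refine ((hasDerivAt_comp_sqrt_sq_add_sq (by positivity)
      (hasDerivAt_radialDeriv hg heven hr)).mul (hasDerivAt_id' x)).congr_deriv ?_
    ring

end Even

/-! ### The third side of a triangle -/

/-- The length `√(s² + t² - 2st cos φ)` of the side opposite to the angle `φ` in a triangle whose
other two sides are `s` and `t`. -/
def thirdSide (s t φ : ℝ) : ℝ := √(s ^ 2 + t ^ 2 - 2 * s * t * cos φ)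

theorem thirdSide_comm (s t φ : ℝ) : thirdSide s t φ = thirdSide t s φ := by
  simp only [thirdSide, add_comm (s ^ 2), mul_right_comm 2 s t]

theorem thirdSide_eq_sqrt_sq_add_sq (s t φ : ℝ) :
    thirdSide s t φ = √((s - t * cos φ) ^ 2 + (t * sin φ) ^ 2) := by
  rw [thirdSide, mul_pow t, sin_sq]
  ring_nf

theorem continuous_thirdSide : Continuous fun x : ℝ × ℝ × ℝ => thirdSide x.1 x.2.1 x.2.2 := by
  unfold thirdSide
  fun_prop

theorem abs_sub_mul_cos_le_thirdSide (s t φ : ℝ) : |s - t * cos φ| ≤ thirdSide s t φ := by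
  rw [thirdSide_eq_sqrt_sq_add_sq]
  exact abs_le_sqrt (le_add_of_nonneg_right (sq_nonneg _))

theorem abs_mul_sin_le_thirdSide (s t φ : ℝ) : |t * sin φ| ≤ thirdSide s t φ := by
  rw [thirdSide_eq_sqrt_sq_add_sq]
  exact abs_le_sqrt (le_add_of_nonneg_left (sq_nonneg _))

theorem thirdSide_pos {s t φ : ℝ} (ht : t ≠ 0) (hφ : sin φ ≠ 0) : 0 < thirdSide s t φ :=
  (abs_pos.2 (mul_ne_zero ht hφ)).trans_le (abs_mul_sin_le_thirdSide s t φ)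

theorem hasDerivAt_thirdSide_angle {s t φ : ℝ} (ht : t ≠ 0) (hφ : sin φ ≠ 0) :
    HasDerivAt (thirdSide s t) (s * t * sin φ / thirdSide s t φ) φ := by
  have hpos : s ^ 2 + t ^ 2 - 2 * s * t * cos φ ≠ 0 := (sqrt_pos.1 (thirdSide_pos ht hφ)).ne'
  refine ((((hasDerivAt_cos φ).const_mul (2 * s * t)).const_sub
    (s ^ 2 + t ^ 2)).sqrt hpos).congr_deriv ?_
  rw [thirdSide]
  ring

/-! ### The Bessel operator applied to the generalized translation -/

/-- The singular Bessel operator `f'' + (ν / s) f'`, here with `ν / 0 = 0`. -/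
def besselOp (ν : ℝ) (f : ℝ → ℝ) (s : ℝ) : ℝ := deriv (deriv f) s + ν / s * deriv f s

/-- The second derivative of `s ↦ g (thirdSide s t φ)` for even `g` of class `C²`. -/
def thirdSideDeriv₂ (g : ℝ → ℝ) (s t φ : ℝ) : ℝ :=
  radialDeriv g (thirdSide s t φ) + radialDefect g (thirdSide s t φ) *
    ((s - t * cos φ) / thirdSide s t φ) * ((s - t * cos φ) / thirdSide s t φ)

section Translation

variable {ν : ℝ} {g : ℝ → ℝ}

theorem hasDerivAt_comp_thirdSide (hg : ContDiff ℝ 2 g) (heven : Function.Even g) (s t φ : ℝ) :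
    HasDerivAt (fun s => g (thirdSide s t φ))
      (radialDeriv g (thirdSide s t φ) * (s - t * cos φ)) s := by
  simp only [thirdSide_eq_sqrt_sq_add_sq]
  exact (hasDerivAt_radial hg heven (s - t * cos φ) (t * sin φ)).comp_sub_const s (t * cos φ)

theorem hasDerivAt_deriv_comp_thirdSide (hg : ContDiff ℝ 2 g) (heven : Function.Even g)
    (s t φ : ℝ) :
    HasDerivAt (fun s => radialDeriv g (thirdSide s t φ) * (s - t * cos φ))
      (thirdSideDeriv₂ g s t φ) s := by
  simp only [thirdSideDeriv₂, thirdSide_eq_sqrt_sq_add_sq]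
  exact (hasDerivAt_radialDeriv_mul hg heven (s - t * cos φ) (t * sin φ)).comp_sub_const s
    (t * cos φ)

theorem continuous_thirdSideDeriv₂ (hg : ContDiff ℝ 2 g) :
    Continuous fun x : ℝ × ℝ × ℝ => thirdSideDeriv₂ g x.1 x.2.1 x.2.2 := by
  have hside := continuous_thirdSide
  have hzero (x : ℝ × ℝ × ℝ) (hx : thirdSide x.1 x.2.1 x.2.2 = 0) :
      radialDefect g (thirdSide x.1 x.2.1 x.2.2) = 0 := by rw [hx, radialDefect_zero]
  have hle (x : ℝ × ℝ × ℝ) := abs_sub_mul_cos_le_thirdSide x.1 x.2.1 x.2.2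
  have honce := continuous_mul_div_of_abs_le ((continuous_radialDefect hg).comp hside)
    (by fun_prop) hside hle hzero
  exact ((continuous_radialDeriv hg).comp hside).add
    (continuous_mul_div_of_abs_le honce (by fun_prop) hside hle fun x hx => by simp [hx])

theorem besselOp_comp_thirdSide (ν : ℝ) (hg : ContDiff ℝ 2 g) (heven : Function.Even g)
    (s t φ : ℝ) :
    besselOp ν (fun s => g (thirdSide s t φ)) s = thirdSideDeriv₂ g s t φ +
      ν / s * (radialDeriv g (thirdSide s t φ) * (s - t * cos φ)) := by
  rw [besselOp, funext fun s => (hasDerivAt_comp_thirdSide hg heven s t φ).deriv,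
    (hasDerivAt_deriv_comp_thirdSide hg heven s t φ).deriv]

theorem continuous_besselOp_comp_thirdSide (ν : ℝ) (hg : ContDiff ℝ 2 g)
    (heven : Function.Even g) (s t : ℝ) :
    Continuous fun φ => besselOp ν (fun s => g (thirdSide s t φ)) s := by
  have hside := continuous_thirdSide
  have hrad := continuous_radialDeriv hg
  have hrad₂ := continuous_thirdSideDeriv₂ hg
  simp only [besselOp_comp_thirdSide ν hg heven]
  fun_prop

theorem besselOp_comp_thirdSide_sub_swap (ν : ℝ) (hg : ContDiff ℝ 2 g) (heven : Function.Even g)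
    {s t : ℝ} (hs : s ≠ 0) (ht : t ≠ 0) (φ : ℝ) :
    besselOp ν (fun s => g (thirdSide s t φ)) s - besselOp ν (fun t => g (thirdSide t s φ)) t =
      (s ^ 2 - t ^ 2) / (s * t) * (radialDefect g (thirdSide s t φ) *
          (s * sin φ / thirdSide s t φ) * (t * sin φ / thirdSide s t φ) +
        ν * radialDeriv g (thirdSide s t φ) * cos φ) := by
  simp only [besselOp_comp_thirdSide ν hg heven, thirdSideDeriv₂, thirdSide_comm t s,
    div_eq_mul_inv _ (thirdSide s t φ)]
  field_simp
  rw [sin_sq]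
  ring

theorem hasDerivAt_genT_left (hν : 0 < ν) (hg : ContDiff ℝ 2 g) (heven : Function.Even g)
    (s t : ℝ) :
    HasDerivAt (fun s => genT ν g s t)
      (Real.Gamma ((ν + 1) / 2) / (√π * Real.Gamma (ν / 2)) * ∫ φ in (0 : ℝ)..π,
        radialDeriv g (thirdSide s t φ) * (s - t * cos φ) * sin φ ^ (ν - 1)) s := by
  have hside := continuous_thirdSide
  have hgc := hg.continuous
  have hrad := continuous_radialDeriv hg
  exact (hasDerivAt_integral_mul_weight (intervalIntegrable_sin_rpow_sub_one hν)
    (fun x φ => hasDerivAt_comp_thirdSide hg heven x t φ) (by fun_prop)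
    (by simp only [Function.HasUncurry.uncurry]; fun_prop) s).const_mul _

theorem hasDerivAt_deriv_genT_left (hν : 0 < ν) (hg : ContDiff ℝ 2 g) (heven : Function.Even g)
    (s t : ℝ) :
    HasDerivAt (deriv fun s => genT ν g s t)
      (Real.Gamma ((ν + 1) / 2) / (√π * Real.Gamma (ν / 2)) * ∫ φ in (0 : ℝ)..π,
        thirdSideDeriv₂ g s t φ * sin φ ^ (ν - 1)) s := by
  have hside := continuous_thirdSide
  have hrad := continuous_radialDeriv hg
  have hrad₂ := continuous_thirdSideDeriv₂ hg
  rw [funext fun s => (hasDerivAt_genT_left hν hg heven s t).deriv]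
  exact (hasDerivAt_integral_mul_weight (intervalIntegrable_sin_rpow_sub_one hν)
    (fun x φ => hasDerivAt_deriv_comp_thirdSide hg heven x t φ) (by fun_prop)
    (by simp only [Function.HasUncurry.uncurry]; fun_prop) s).const_mul _

theorem besselOp_genT_left (hν : 0 < ν) (hg : ContDiff ℝ 2 g) (heven : Function.Even g)
    (s t : ℝ) :
    besselOp ν (fun s => genT ν g s t) s =
      Real.Gamma ((ν + 1) / 2) / (√π * Real.Gamma (ν / 2)) * ∫ φ in (0 : ℝ)..π,
        besselOp ν (fun s => g (thirdSide s t φ)) s * sin φ ^ (ν - 1) := by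
  have hside := continuous_thirdSide
  have hrad := continuous_radialDeriv hg
  have hrad₂ := continuous_thirdSideDeriv₂ hg
  rw [besselOp, (hasDerivAt_deriv_genT_left hν hg heven s t).deriv,
    (hasDerivAt_genT_left hν hg heven s t).deriv, mul_left_comm, ← mul_add,
    ← intervalIntegral.integral_const_mul, ← intervalIntegral.integral_add
      (intervalIntegrable_mul_sin_rpow_sub_one hν (by fun_prop))
      ((intervalIntegrable_mul_sin_rpow_sub_one hν (by fun_prop)).const_mul _)]
  simp only [besselOp_comp_thirdSide ν hg heven, add_mul, mul_assoc]

theorem hasDerivAt_radialDeriv_thirdSide_mul_sin_rpow (ν : ℝ) (hg : ContDiff ℝ 2 g)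
    (heven : Function.Even g) (s : ℝ) {t φ : ℝ} (ht : t ≠ 0) (hφ : sin φ ≠ 0) :
    HasDerivAt (fun φ => radialDeriv g (thirdSide s t φ) * sin φ ^ ν)
      ((radialDefect g (thirdSide s t φ) *
          (s * sin φ / thirdSide s t φ) * (t * sin φ / thirdSide s t φ) +
        ν * radialDeriv g (thirdSide s t φ) * cos φ) * sin φ ^ (ν - 1)) φ := by
  have hrad := (hasDerivAt_radialDeriv hg heven (thirdSide_pos ht hφ).ne').comp φ
    (hasDerivAt_thirdSide_angle (s := s) ht hφ)
  have hpow : sin φ ^ ν = sin φ * sin φ ^ (ν - 1) := by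
    rw [rpow_sub_one hφ, mul_div_cancel₀ _ hφ]
  refine (hrad.mul ((hasDerivAt_sin φ).rpow_const (p := ν) (Or.inl hφ))).congr_deriv ?_
  rw [Function.comp_apply, hpow]
  ring

theorem integral_deriv_radialDeriv_thirdSide_mul_sin_rpow (hν : 0 < ν) (hg : ContDiff ℝ 2 g)
    (heven : Function.Even g) (s : ℝ) {t : ℝ} (ht : t ≠ 0) :
    ∫ φ in (0 : ℝ)..π,
      (radialDefect g (thirdSide s t φ) *
          (s * sin φ / thirdSide s t φ) * (t * sin φ / thirdSide s t φ) +
        ν * radialDeriv g (thirdSide s t φ) * cos φ) * sin φ ^ (ν - 1) = 0 := by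
  have hside : Continuous (thirdSide s t) := by
    have := continuous_thirdSide
    fun_prop
  have hrad : Continuous fun φ => radialDeriv g (thirdSide s t φ) :=
    (continuous_radialDeriv hg).comp hside
  have hdefect : Continuous fun φ => radialDefect g (thirdSide s t φ) *
      (s * sin φ / thirdSide s t φ) * (t * sin φ / thirdSide s t φ) :=
    continuous_mul_div_of_abs_le
      (continuous_mul_div_of_abs_le ((continuous_radialDefect hg).comp hside) (by fun_prop) hside
        (fun φ => thirdSide_comm s t φ ▸ abs_mul_sin_le_thirdSide t s φ)
        fun φ hφ => by simp [hφ, radialDefect_zero])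
      (by fun_prop) hside (abs_mul_sin_le_thirdSide s t) fun φ hφ => by simp [hφ]
  rw [intervalIntegral.integral_eq_sub_of_hasDerivAt_of_le pi_pos.le
    (f := fun φ => radialDeriv g (thirdSide s t φ) * sin φ ^ ν)]
  · simp [zero_rpow hν.ne']
  · exact (hrad.mul (continuous_sin.rpow_const fun _ => Or.inr hν.le)).continuousOn
  · exact fun φ hφ => hasDerivAt_radialDeriv_thirdSide_mul_sin_rpow ν hg heven s ht
      (sin_pos_of_mem_Ioo hφ).ne'
  · exact intervalIntegrable_mul_sin_rpow_sub_one hν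
      (hdefect.add ((hrad.const_mul ν).mul continuous_cos))

theorem genT_comm (ν : ℝ) (g : ℝ → ℝ) (s t : ℝ) : genT ν g s t = genT ν g t s := by
  simp only [genT, add_comm (s ^ 2), mul_right_comm 2 s t]

theorem besselOp_genT_comm (hν : 0 < ν) (hg : ContDiff ℝ 2 g) (heven : Function.Even g)
    {s t : ℝ} (hs : s ≠ 0) (ht : t ≠ 0) :
    besselOp ν (fun s' => genT ν g s' t) s = besselOp ν (fun t' => genT ν g s t') t := by
  have hint (s t : ℝ) := intervalIntegrable_mul_sin_rpow_sub_one hν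
    (continuous_besselOp_comp_thirdSide ν hg heven s t)
  simp only [genT_comm ν g s, besselOp_genT_left hν hg heven]
  congr 1
  rw [← sub_eq_zero, ← intervalIntegral.integral_sub (hint s t) (hint t s)]
  simp only [← sub_mul, besselOp_comp_thirdSide_sub_swap ν hg heven hs ht,
    mul_assoc ((s ^ 2 - t ^ 2) / _)]
  rw [intervalIntegral.integral_const_mul,
    integral_deriv_radialDeriv_thirdSide_mul_sin_rpow hν hg heven s ht, mul_zero]

/-! ### Initial values -/

theorem even_genT_right (ν : ℝ) (g : ℝ → ℝ) (s : ℝ) : Function.Even (genT ν g s) := fun t => by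
  have hreflect := intervalIntegral.integral_comp_sub_left (a := 0) (b := π)
    (fun φ => g √(s ^ 2 + t ^ 2 - 2 * s * t * cos φ) * sin φ ^ (ν - 1)) π
  rw [sub_self, sub_zero] at hreflect
  rw [genT, genT, ← hreflect]
  simp [cos_pi_sub, sin_pi_sub]

theorem genT_zero_right (hν : 0 < ν) (g : ℝ → ℝ) (s : ℝ) : genT ν g s 0 = g |s| := by
  have hΓ : Real.Gamma (ν / 2) ≠ 0 := (Real.Gamma_pos_of_pos (half_pos hν)).ne'
  have hΓ_half : Real.Gamma ((ν + 1) / 2) ≠ 0 := (Real.Gamma_pos_of_pos (by linarith)).ne'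
  simp only [genT, ne_eq, OfNat.ofNat_ne_zero, not_false_eq_true, zero_pow, add_zero, mul_zero,
    zero_mul, sub_zero, sqrt_sq_eq_abs, intervalIntegral.integral_const_mul,
    integral_sin_rpow_sub_one_eq_Gamma hν]
  field_simp

theorem hasDerivAt_genT_zero_right (hν : 0 < ν) (hg : ContDiff ℝ 2 g) (heven : Function.Even g)
    (s : ℝ) : HasDerivAt (genT ν g s) 0 0 := by
  have hdiff : DifferentiableAt ℝ (genT ν g s) 0 := by
    simpa only [genT_comm ν g _ s] using
      (hasDerivAt_genT_left hν hg heven 0 s).differentiableAt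
  simpa only [(odd_deriv_of_even (even_genT_right ν g s)).map_zero] using hdiff.hasDerivAt

end Translation

/-- `Φ(s,t) = ᵛ𝒯_s^t g(s)` solves the singular hyperbolic (Euler–Poisson–Darboux type)
equation `Φ_ss + (ν/s)Φ_s = Φ_tt + (ν/t)Φ_t` with `Φ(s,0) = g(s)`, `Φ_t(s,0) = 0`. -/
theorem genT_solves_EPD (ν : ℝ) (hν : 0 < ν) (g : ℝ → ℝ)
    (hg : ContDiff ℝ 2 g) (hgeven : ∀ x, g (-x) = g x) :
    (∀ s t : ℝ, 0 < s → 0 < t →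
        deriv (fun s' => deriv (fun s'' => genT ν g s'' t) s') s +
            (ν / s) * deriv (fun s' => genT ν g s' t) s =
          deriv (fun t' => deriv (fun t'' => genT ν g s t'') t') t +
            (ν / t) * deriv (fun t' => genT ν g s t') t) ∧
      (∀ s : ℝ, 0 ≤ s → genT ν g s 0 = g s) ∧
      (∀ s : ℝ, 0 ≤ s → deriv (fun t => genT ν g s t) 0 = 0) := by
  refine ⟨fun s t hs ht => besselOp_genT_comm hν hg hgeven hs.ne' ht.ne', fun s _ => ?_,
    fun s _ => (hasDerivAt_genT_zero_right hν hg hgeven s).deriv⟩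
  rw [genT_zero_right hν, even_apply_abs hgeven]
end
end

section
/- The weighted spherical mean of the product Bessel kernel is a Bessel multiplier: M_μ^γ 𝐣_γ(x, ξ) = 𝐣_γ(x, ξ) · j_{(n+|γ|−2)/2}(μ) for |ξ| = 1, and consequently the iterated mean satisfies I_{λ,μ}^γ 𝐣_γ(x, ξ) = 𝐣_γ(x, ξ) · j_{(n+|γ|−2)/2}(μ) · j_{(n+|γ|−2)/2}(λ). -/
open MeasureTheory Real Set Metric

noncomputable section

/-- The part of the unit sphere in the open positive orthant. -/
def sphPos (n : ℕ) : Set (Metric.sphere (0 : EuclideanSpace ℝ (Fin n)) 1) :=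
  {x | ∀ i, 0 < (x : EuclideanSpace ℝ (Fin n)) i}

/-- Surface measure on the unit sphere of `ℝⁿ`. -/
def sphMeasure (n : ℕ) : Measure (Metric.sphere (0 : EuclideanSpace ℝ (Fin n)) 1) :=
  (volume : Measure (EuclideanSpace ℝ (Fin n))).toSphere

/-- The multidimensional generalized translation
`T^y f(x) = ∏ᵢ (^{γᵢ}𝒯_{xᵢ}^{yᵢ} f)(x)`, written as an `n`-fold integral. -/
def multiT (n : ℕ) (γ : Fin n → ℝ) (f : (Fin n → ℝ) → ℝ) (x y : Fin n → ℝ) : ℝ :=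
  (∏ i, Real.Gamma ((γ i + 1) / 2) / (Real.sqrt π * Real.Gamma (γ i / 2))) *
    ∫ α in Set.pi Set.univ (fun _ : Fin n => Ioc (0:ℝ) π),
      f (fun i => Real.sqrt ((x i) ^ 2 + (y i) ^ 2 - 2 * x i * y i * Real.cos (α i))) *
        ∏ i, Real.sin (α i) ^ (γ i - 1)

/-- The normalizing constant `|S₁⁺(n)|_γ = ∫_{S₁⁺(n)} y^γ dS(y)`. -/
def sphConst (n : ℕ) (γ : Fin n → ℝ) : ℝ :=
  ∫ y in sphPos n, ∏ i, ((y : EuclideanSpace ℝ (Fin n)) i) ^ (γ i) ∂(sphMeasure n)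

/-- The weighted spherical mean
`M_r^γ f(x) = (1/|S₁⁺(n)|_γ) ∫_{S₁⁺(n)} T^{ry} f(x) y^γ dS(y)`. -/
def sMean (n : ℕ) (γ : Fin n → ℝ) (f : (Fin n → ℝ) → ℝ) (x : Fin n → ℝ) (r : ℝ) : ℝ :=
  (1 / sphConst n γ) *
    ∫ y in sphPos n,
      multiT n γ f x (fun i => r * (y : EuclideanSpace ℝ (Fin n)) i) *
        ∏ i, ((y : EuclideanSpace ℝ (Fin n)) i) ^ (γ i) ∂(sphMeasure n)

/-- The iterated weighted spherical mean `I_f^γ(x; λ, μ) = M_λ^γ M_μ^γ f(x)`. -/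
def iMean (n : ℕ) (γ : Fin n → ℝ) (f : (Fin n → ℝ) → ℝ) (x : Fin n → ℝ)
    (lam mu : ℝ) : ℝ :=
  sMean n γ (fun z => sMean n γ f z mu) x lam

/-- The normalized Bessel function `j_ω`, via the Poisson integral representation
`j_ω(t) = (Γ(ω+1)/(√π Γ(ω+1/2))) ∫_0^π cos(t cos θ) sin^{2ω} θ dθ`,
which for `ω > -1/2` agrees with `Γ(ω+1)(2/t)^ω J_ω(t)`. -/
def normBessel (ω t : ℝ) : ℝ :=
  (Real.Gamma (ω + 1) / (Real.sqrt π * Real.Gamma (ω + 1 / 2))) *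
    ∫ θ in (0:ℝ)..π, Real.cos (t * Real.cos θ) * Real.sin θ ^ (2 * ω)

/-- The product Bessel kernel `𝐣_γ(x, ξ) = ∏ᵢ j_{(γᵢ−1)/2}(xᵢ ξᵢ)`. -/
def besselKernel (n : ℕ) (γ : Fin n → ℝ) (x ξ : Fin n → ℝ) : ℝ :=
  ∏ i, normBessel ((γ i - 1) / 2) (x i * ξ i)

/-!
By Gegenbauer's product formula, the mean of `j_ω(√(x² + y² - 2xy cos θ) s)` against
`sin^{2ω} θ dθ` is `j_ω(xs) j_ω(ys)`; hence the generalized translate of `𝐣_γ(·, ξ)` by `ry` at `x`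
is `𝐣_γ(x, ξ) 𝐣_γ(ry, ξ)`. Expanding both sides in powers of `s`, the product formula is the
Chu–Vandermonde identity. What remains is the average of `𝐣_γ(ry, ξ)` over the positive part of the
sphere: Dirichlet's integral computes the power series of the product kernel term by term, and the
multinomial theorem collects the terms of equal degree into the series of
`j_{(n+|γ|-2)/2}(r‖ξ‖)`.
-/

open scoped Nat

open ProbabilityTheory (beta beta_pos)

lemma hasSum_integral_mul_of_norm_le {ι α 𝕜 : Type*} [Countable ι] [RCLike 𝕜]
    [MeasurableSpace α] {μ : Measure α} {f : ι → α → 𝕜} {g w : α → 𝕜} {b : ι → ℝ}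
    (hf : ∀ i, AEStronglyMeasurable (f i) μ) (hfb : ∀ i, ∀ᵐ a ∂μ, ‖f i a‖ ≤ b i)
    (hb : Summable b) (hw : Integrable w μ) (hg : ∀ᵐ a ∂μ, HasSum (fun i => f i a) (g a)) :
    HasSum (fun i => ∫ a, f i a * w a ∂μ) (∫ a, g a * w a ∂μ) := by
  refine hasSum_integral_of_dominated_convergence (fun i a => b i * ‖w a‖)
    (fun i => (hf i).mul hw.1) (fun i => (hfb i).mono fun a ha => ?_)
    (ae_of_all _ fun a => hb.mul_right _) ?_ (hg.mono fun a ha => ha.mul_right _)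
  · rw [norm_mul]
    gcongr
  · simp_rw [tsum_mul_right]
    exact hw.norm.const_mul _

lemma integral_rpow_mul_one_sub_rpow {u v : ℝ} (hu : 0 < u) (hv : 0 < v) :
    ∫ t in Ioo (0 : ℝ) 1, t ^ (u - 1) * (1 - t) ^ (v - 1) = beta u v := by
  have h := ProbabilityTheory.beta_eq_betaIntegralReal u v hu hv
  rw [Complex.betaIntegral, intervalIntegral.integral_of_le zero_le_one,
    integral_Ioc_eq_integral_Ioo] at h
  rw [h, ← Complex.ofReal_re (∫ t in Ioo (0 : ℝ) 1, t ^ (u - 1) * (1 - t) ^ (v - 1)),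
    ← integral_complex_ofReal]
  congr 1
  refine setIntegral_congr_fun measurableSet_Ioo fun t ht => ?_
  rw [Complex.ofReal_mul, Complex.ofReal_cpow ht.1.le, Complex.ofReal_cpow (by linarith [ht.2])]
  push_cast
  rfl

lemma bijOn_cos_sq : BijOn (fun θ => cos θ ^ 2) (Ioo 0 (π / 2)) (Ioo 0 1) := by
  have cos_pos {θ : ℝ} (hθ : θ ∈ Ioo 0 (π / 2)) : 0 < cos θ :=
    cos_pos_of_mem_Ioo ⟨by linarith [hθ.1, pi_pos], hθ.2⟩
  have sin_pos {θ : ℝ} (hθ : θ ∈ Ioo 0 (π / 2)) : 0 < sin θ :=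
    sin_pos_of_pos_of_lt_pi hθ.1 (by linarith [hθ.2, pi_pos])
  refine ⟨fun θ hθ => ⟨pow_pos (cos_pos hθ) 2, ?_⟩, fun a ha b hb hab => ?_, fun t ht => ?_⟩
  · nlinarith [sin_pos hθ, sin_sq_add_cos_sq θ]
  · have hcos : cos a = cos b := (pow_left_inj₀ (cos_pos ha).le (cos_pos hb).le two_ne_zero).1 hab
    exact injOn_cos ⟨ha.1.le, by linarith [ha.2, pi_pos]⟩ ⟨hb.1.le, by linarith [hb.2, pi_pos]⟩ hcos
  · have hlt : √t < 1 := (sqrt_lt' one_pos).2 (by simpa using ht.2)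
    refine ⟨arccos √t, ⟨arccos_pos.2 hlt, arccos_lt_pi_div_two.2 (sqrt_pos.2 ht.1)⟩, ?_⟩
    simp only
    rw [cos_arccos (by linarith [sqrt_nonneg t]) hlt.le, sq_sqrt ht.1.le]

lemma integral_cos_rpow_mul_sin_rpow {u v : ℝ} (hu : 0 < u) (hv : 0 < v) :
    ∫ θ in (0 : ℝ)..π / 2, cos θ ^ (2 * u - 1) * sin θ ^ (2 * v - 1) = beta u v / 2 := by
  have hderiv : ∀ θ ∈ Ioo 0 (π / 2),
      HasDerivWithinAt (fun θ => cos θ ^ 2) (2 * cos θ * -sin θ) (Ioo 0 (π / 2)) θ := fun θ _ => by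
    simpa using ((hasDerivAt_cos θ).fun_pow 2).hasDerivWithinAt
  have hsubst := integral_image_eq_integral_abs_deriv_smul measurableSet_Ioo hderiv
    bijOn_cos_sq.injOn (fun t => t ^ (u - 1) * (1 - t) ^ (v - 1))
  rw [bijOn_cos_sq.image_eq, integral_rpow_mul_one_sub_rpow hu hv] at hsubst
  rw [hsubst, intervalIntegral.integral_of_le (by positivity), integral_Ioc_eq_integral_Ioo,
    ← integral_div]
  refine setIntegral_congr_fun measurableSet_Ioo fun θ hθ => ?_
  have hcos : 0 < cos θ := cos_pos_of_mem_Ioo ⟨by linarith [hθ.1, pi_pos], hθ.2⟩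
  have hsin : 0 < sin θ := sin_pos_of_pos_of_lt_pi hθ.1 (by linarith [hθ.2, pi_pos])
  have rpow_split {a : ℝ} (ha : 0 < a) (p : ℝ) : a ^ (2 * p - 1) = (a ^ 2) ^ (p - 1) * a := by
    rw [← rpow_two, ← rpow_mul ha.le, ← rpow_add_one ha.ne']
    ring_nf
  simp only [smul_eq_mul]
  rw [← sin_sq θ, rpow_split hcos, rpow_split hsin, mul_neg, abs_neg,
    abs_of_pos (by positivity)]
  ring

lemma integral_cos_pow_mul_sin_rpow_of_odd {k : ℕ} (hk : Odd k) (p : ℝ) :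
    ∫ θ in (0 : ℝ)..π, cos θ ^ k * sin θ ^ p = 0 := by
  have hreflect := intervalIntegral.integral_comp_sub_left
    (fun θ => cos θ ^ k * sin θ ^ p) (a := 0) (b := π) π
  simp only [cos_pi_sub, sin_pi_sub, sub_self, sub_zero, hk.neg_pow, neg_mul,
    intervalIntegral.integral_neg] at hreflect
  linarith

lemma intervalIntegrable_sin_rpow {p : ℝ} (hp : -1 < p) :
    IntervalIntegrable (fun θ => sin θ ^ p) volume 0 π := by
  have hhalf : IntervalIntegrable (fun θ => sin θ ^ p) volume 0 (π / 2) := by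
    by_contra h
    have hbeta := integral_cos_rpow_mul_sin_rpow (u := 1 / 2) (v := (p + 1) / 2) (by norm_num)
      (by linarith)
    simp only [mul_div_cancel₀ _ (two_ne_zero' ℝ), sub_self, rpow_zero, one_mul,
      add_sub_cancel_right, intervalIntegral.integral_undef h] at hbeta
    linarith [beta_pos (α := 1 / 2) (β := (p + 1) / 2) (by norm_num) (by linarith)]
  refine hhalf.trans ?_
  simpa [sub_half] using (hhalf.comp_sub_left π).symm

lemma integral_cos_pow_mul_sin_rpow {p : ℝ} (hp : -1 < p) (k : ℕ) :
    ∫ θ in (0 : ℝ)..π, cos θ ^ (2 * k) * sin θ ^ p = beta (k + 1 / 2) ((p + 1) / 2) := by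
  have hint : IntervalIntegrable (fun θ => cos θ ^ (2 * k) * sin θ ^ p) volume 0 π :=
    (intervalIntegrable_sin_rpow hp).continuousOn_mul (by fun_prop)
  have hhalf := integral_cos_rpow_mul_sin_rpow (u := k + 1 / 2) (v := (p + 1) / 2)
    (by positivity) (by linarith)
  simp only [show 2 * ((k : ℝ) + 1 / 2) - 1 = (2 * k : ℕ) by push_cast; ring, rpow_natCast,
    show 2 * ((p + 1) / 2) - 1 = p by ring] at hhalf
  have hreflect := intervalIntegral.integral_comp_sub_left
    (fun θ => cos θ ^ (2 * k) * sin θ ^ p) (a := 0) (b := π / 2) π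
  simp only [cos_pi_sub, sin_pi_sub, sub_zero, sub_half, (even_two_mul k).neg_pow] at hreflect
  have hmem : π / 2 ∈ uIcc 0 π := by rw [uIcc_of_le pi_pos.le]; constructor <;> linarith [pi_pos]
  rw [← intervalIntegral.integral_add_adjacent_intervals (b := π / 2)
    (hint.mono_set (uIcc_subset_uIcc_left hmem)) (hint.mono_set (uIcc_subset_uIcc_right hmem)),
    ← hreflect, hhalf, add_halves]

lemma Gamma_natCast_add_half (k : ℕ) : Gamma (k + 1 / 2) = (2 * k)! / (4 ^ k * k !) * √π := by
  have hdup := Gamma_mul_Gamma_add_half (k + 1 / 2)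
  have hpow : (2 : ℝ) ^ (1 - 2 * ((k : ℝ) + 1 / 2)) = (4 ^ k)⁻¹ := by
    rw [show 1 - 2 * ((k : ℝ) + 1 / 2) = -((2 * k : ℕ) : ℝ) by push_cast; ring,
      rpow_neg two_pos.le, rpow_natCast, pow_mul]
    norm_num
  rw [hpow, add_assoc, add_halves, Gamma_nat_eq_factorial, mul_add, ← Nat.cast_two,
    ← Nat.cast_mul, Nat.cast_two, mul_div_cancel₀ _ two_ne_zero, Gamma_nat_eq_factorial] at hdup
  field_simp at hdup ⊢
  exact hdup

/-- The mean of `f` over `[0, π]` for the probability density proportional to `sin θ ^ (2 * ω)`.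
For `f θ = cos (t * cos θ)` it is the normalized Bessel function of order `ω`, and for
`ω = (γ - 1) / 2` it is the average defining the one-dimensional generalized translation of
index `γ`. -/
def gegenbauerMean (ω : ℝ) (f : ℝ → ℝ) : ℝ :=
  Gamma (ω + 1) / (√π * Gamma (ω + 1 / 2)) * ∫ θ in (0 : ℝ)..π, f θ * sin θ ^ (2 * ω)

/-- The coefficients of the normalized Bessel function of order `ω` as a power series in
`-(t ^ 2 / 4)`. -/
def besselCoeff (ω : ℝ) (k : ℕ) : ℝ :=
  Gamma (ω + 1) / (k ! * Gamma (ω + 1 + k))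

section GegenbauerMean

variable {ω : ℝ} {ι : Type*}

lemma besselCoeff_mul_Gamma (hω : -1 < ω) (k : ℕ) :
    besselCoeff ω k * Gamma (ω + 1 + k) = Gamma (ω + 1) / k ! := by
  have : Gamma (ω + 1 + k) ≠ 0 :=
    (Gamma_pos_of_pos (by linarith [k.cast_nonneg (α := ℝ)])).ne'
  rw [besselCoeff]
  field_simp

lemma gegenbauerMean_const_mul (ω c : ℝ) (f : ℝ → ℝ) :
    gegenbauerMean ω (fun θ => c * f θ) = c * gegenbauerMean ω f := by
  simp only [gegenbauerMean, mul_assoc, intervalIntegral.integral_const_mul]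
  ring

lemma intervalIntegrable_mul_sin_rpow (hω : -(1 / 2) < ω) {f : ℝ → ℝ} (hf : Continuous f) :
    IntervalIntegrable (fun θ => f θ * sin θ ^ (2 * ω)) volume 0 π :=
  (intervalIntegrable_sin_rpow (by linarith)).continuousOn_mul hf.continuousOn

lemma gegenbauerMean_sum (hω : -(1 / 2) < ω) (s : Finset ι) {f : ι → ℝ → ℝ}
    (hf : ∀ i ∈ s, Continuous (f i)) :
    gegenbauerMean ω (fun θ => ∑ i ∈ s, f i θ) = ∑ i ∈ s, gegenbauerMean ω (f i) := by
  simp only [gegenbauerMean, Finset.sum_mul]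
  rw [intervalIntegral.integral_finsetSum fun i hi => intervalIntegrable_mul_sin_rpow hω (hf i hi),
    Finset.mul_sum]

lemma hasSum_gegenbauerMean [Countable ι] (hω : -(1 / 2) < ω) {f : ι → ℝ → ℝ} {g : ℝ → ℝ}
    {b : ι → ℝ} (hf : ∀ i, Continuous (f i)) (hfb : ∀ i θ, |f i θ| ≤ b i) (hb : Summable b)
    (hg : ∀ θ, HasSum (fun i => f i θ) (g θ)) :
    HasSum (fun i => gegenbauerMean ω (f i)) (gegenbauerMean ω g) := by
  simp only [gegenbauerMean, intervalIntegral.integral_of_le pi_pos.le]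
  exact (hasSum_integral_mul_of_norm_le (fun i => (hf i).aestronglyMeasurable)
    (fun i => ae_of_all _ (hfb i)) hb (intervalIntegrable_sin_rpow (by linarith)).1
    (ae_of_all _ hg)).mul_left _

lemma gegenbauerMean_cos_pow_of_odd (ω : ℝ) {k : ℕ} (hk : Odd k) :
    gegenbauerMean ω (fun θ => cos θ ^ k) = 0 := by
  rw [gegenbauerMean, integral_cos_pow_mul_sin_rpow_of_odd hk, mul_zero]

lemma gegenbauerMean_cos_pow (hω : -(1 / 2) < ω) (k : ℕ) :
    gegenbauerMean ω (fun θ => cos θ ^ (2 * k)) = (2 * k)! / 4 ^ k * besselCoeff ω k := by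
  have hG : Gamma (ω + 1 / 2) ≠ 0 := (Gamma_pos_of_pos (by linarith)).ne'
  rw [gegenbauerMean, integral_cos_pow_mul_sin_rpow (by linarith), beta, besselCoeff,
    Gamma_natCast_add_half, show (2 * ω + 1) / 2 = ω + 1 / 2 by ring,
    show (k : ℝ) + 1 / 2 + (ω + 1 / 2) = ω + 1 + k by ring]
  generalize Gamma (ω + 1 / 2) = G at *
  field_simp

theorem hasSum_normBessel (hω : -(1 / 2) < ω) (t : ℝ) :
    HasSum (fun k => besselCoeff ω k * (-(t ^ 2 / 4)) ^ k) (normBessel ω t) := by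
  have hmean (k : ℕ) : gegenbauerMean ω (fun θ => (-1) ^ k * (t * cos θ) ^ (2 * k) / (2 * k)!) =
      besselCoeff ω k * (-(t ^ 2 / 4)) ^ k := by
    calc gegenbauerMean ω (fun θ => (-1) ^ k * (t * cos θ) ^ (2 * k) / (2 * k)!)
        = gegenbauerMean ω (fun θ => (-1) ^ k * t ^ (2 * k) / (2 * k)! * cos θ ^ (2 * k)) := by
          congr 1 with θ
          ring
      _ = besselCoeff ω k * (-(t ^ 2 / 4)) ^ k := by
          rw [gegenbauerMean_const_mul, gegenbauerMean_cos_pow hω, neg_pow (t ^ 2 / 4), div_pow,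
            ← pow_mul]
          field_simp
  simp_rw [← hmean]
  refine hasSum_gegenbauerMean hω (by fun_prop) (fun k θ => ?_) (hasSum_cosh |t|).summable
    fun θ => hasSum_cos (t * cos θ)
  rw [abs_div, abs_mul, abs_pow, abs_pow, abs_neg, abs_one, one_pow, one_mul, abs_mul, Nat.abs_cast]
  gcongr
  exact mul_le_of_le_one_right (abs_nonneg t) (abs_cos_le_one θ)

lemma summable_norm_besselCoeff_mul_pow (hω : -(1 / 2) < ω) (s : ℝ) :
    Summable fun k => ‖besselCoeff ω k * s ^ k‖ := by
  refine (hasSum_normBessel hω (2 * √|s|)).summable.norm.congr fun k => ?_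
  rw [mul_pow, sq_sqrt (abs_nonneg s), norm_mul, norm_mul, norm_pow, norm_pow, norm_neg,
    show (2 : ℝ) ^ 2 * |s| / 4 = |s| by ring, norm_eq_abs |s|, abs_abs, norm_eq_abs s]

end GegenbauerMean

section ProductFormula

open Finset.HasAntidiagonal (antidiagonal)

variable {M K : Type*} [AddCommMonoid M] [Field K] [CharZero K] {ω : ℝ}

lemma Gamma_add_natCast_eq_descPochhammer_mul {a : ℝ} (ha : 0 < a) (k : ℕ) :
    Gamma (a + k) = (descPochhammer ℤ k).smeval (a + k - 1) * Gamma a := by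
  rw [Polynomial.descPochhammer_smeval_eq_ascPochhammer,
    Polynomial.ascPochhammer_smeval_eq_eval, show a + k - 1 - k + 1 = a by ring]
  induction k with
  | zero => simp
  | succ k ih =>
    have hak : a + k ≠ 0 := by positivity
    rw [Nat.cast_succ, ← add_assoc, Gamma_add_one hak, ih, ascPochhammer_succ_eval]
    ring

-- Chu–Vandermonde for the falling factorials of `p` and `a + k - 1`.
lemma sum_choose_mul_descFactorial_div_Gamma {a : ℝ} (ha : 0 < a) (k p : ℕ) :
    ∑ ij ∈ antidiagonal k, k.choose ij.1 * (p.descFactorial ij.1 / Gamma (a + ij.1)) =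
      Gamma (a + k + p) / (Gamma (a + k) * Gamma (a + p)) := by
  have hGk : 0 < Gamma (a + k) := Gamma_pos_of_pos (by positivity)
  have hGp : 0 < Gamma (a + p) := Gamma_pos_of_pos (by positivity)
  have hkp := Gamma_add_natCast_eq_descPochhammer_mul (a := a + p) (by positivity) k
  rw [show a + k + p = a + p + k by ring, hkp, show a + p + k - 1 = p + (a + k - 1) by ring,
    Ring.descPochhammer_smeval_add k (Commute.all _ _), mul_div_mul_right _ _ hGp.ne',
    Finset.sum_div]
  refine Finset.sum_congr rfl fun ij hij => ?_
  have hGi : 0 < Gamma (a + ij.1) := Gamma_pos_of_pos (by positivity)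
  have hGk_eq := Gamma_add_natCast_eq_descPochhammer_mul (a := a + ij.1) (by positivity) ij.2
  have hij_eq : a + ij.1 + ij.2 = a + k := by
    rw [← Finset.HasAntidiagonal.mem_antidiagonal.1 hij, Nat.cast_add, add_assoc]
  rw [hij_eq] at hGk_eq
  rw [Polynomial.descPochhammer_smeval_eq_descFactorial, mul_div_assoc]
  congr 1
  rw [div_eq_div_iff hGi.ne' hGk.ne', mul_assoc, ← hGk_eq]

lemma sum_range_min_div_Gamma {a : ℝ} (ha : 0 < a) (k p : ℕ) :
    ∑ l ∈ Finset.range (min k p + 1), 1 / ((k - l)! * (p - l)! * (l ! * Gamma (a + l))) =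
      Gamma (a + k + p) / (k ! * p ! * (Gamma (a + k) * Gamma (a + p))) := by
  rw [mul_comm, ← div_div, ← sum_choose_mul_descFactorial_div_Gamma ha,
    Finset.Nat.sum_antidiagonal_eq_sum_range_succ_mk, Finset.sum_div]
  refine (Finset.sum_congr rfl fun l hl => ?_).trans (Finset.sum_subset
    (Finset.range_mono (Nat.add_le_add_right (min_le_left k p) 1)) fun l hlk hlp => ?_)
  · obtain ⟨hlk, hlp⟩ : l ≤ k ∧ l ≤ p := le_min_iff.1 (Finset.mem_range_succ_iff.1 hl)
    have hdesc : ((p - l)! * p.descFactorial l : ℝ) = p ! := mod_cast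
      Nat.factorial_mul_descFactorial hlp
    have hdesc_ne : (p.descFactorial l : ℝ) ≠ 0 := mod_cast (Nat.descFactorial_pos.2 hlp).ne'
    rw [Nat.cast_choose ℝ hlk, ← hdesc]
    field_simp
  · rw [Finset.mem_range] at hlk hlp
    rw [Nat.descFactorial_of_lt (by omega)]
    simp

lemma besselCoeff_mul_besselCoeff (hω : -1 < ω) (k p : ℕ) :
    besselCoeff ω k * besselCoeff ω p = (k + p)! * besselCoeff ω (k + p) *
      ∑ l ∈ Finset.range (min k p + 1), besselCoeff ω l / ((k - l)! * (p - l)!) := by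
  have ha : 0 < ω + 1 := by linarith
  have hsum : ∑ l ∈ Finset.range (min k p + 1), besselCoeff ω l / ((k - l)! * (p - l)!) =
      Gamma (ω + 1) * ∑ l ∈ Finset.range (min k p + 1),
        1 / ((k - l)! * (p - l)! * (l ! * Gamma (ω + 1 + l))) := by
    rw [Finset.mul_sum]
    refine Finset.sum_congr rfl fun l _ => ?_
    rw [besselCoeff, div_div, mul_one_div, mul_comm ((k - l)! * (p - l)! : ℝ)]
  have hG : Gamma (ω + 1 + k + p) ≠ 0 := (Gamma_pos_of_pos (by positivity)).ne'
  rw [hsum, sum_range_min_div_Gamma ha]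
  simp only [besselCoeff, Nat.cast_add, ← add_assoc]
  field_simp

lemma sum_range_eq_sum_even (m : ℕ) {f : ℕ → M} (hf : ∀ j, Odd j → f j = 0) :
    ∑ j ∈ Finset.range (m + 1), f j = ∑ l ∈ Finset.range (m / 2 + 1), f (2 * l) := by
  refine (Finset.sum_of_injOn (2 * ·) ?_ ?_ ?_ fun _ _ => rfl).symm
  · exact (mul_right_injective₀ two_ne_zero).injOn
  · intro l hl
    simp only [Finset.coe_range, mem_Iio] at hl ⊢
    omega
  · intro j hj hj_image
    refine hf j (Nat.not_even_iff_odd.1 fun hj_even => hj_image ?_)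
    obtain ⟨l, rfl⟩ := hj_even.two_dvd
    rw [Finset.mem_range] at hj
    exact ⟨l, by simp only [Finset.coe_range, mem_Iio]; omega, rfl⟩

lemma sum_range_sum_antidiagonal_eq_sum_antidiagonal_sum_range_min (m : ℕ)
    (f : ℕ → ℕ → ℕ → M) :
    ∑ l ∈ Finset.range (m / 2 + 1), ∑ ij ∈ antidiagonal (m - 2 * l), f ij.1 ij.2 l =
      ∑ kp ∈ antidiagonal m, ∑ l ∈ Finset.range (min kp.1 kp.2 + 1),
        f (kp.1 - l) (kp.2 - l) l := by
  rw [Finset.sum_sigma', Finset.sum_sigma']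
  refine Finset.sum_nbij' (fun q => ⟨(q.2.1 + q.1, q.2.2 + q.1), q.1⟩)
    (fun q => ⟨q.2, (q.1.1 - q.2, q.1.2 - q.2)⟩) ?_ ?_ ?_ ?_ ?_
  · rintro ⟨l, i, j⟩ h
    simp only [Finset.mem_sigma, Finset.mem_range, Finset.HasAntidiagonal.mem_antidiagonal] at h ⊢
    omega
  · rintro ⟨⟨k, p⟩, l⟩ h
    simp only [Finset.mem_sigma, Finset.mem_range, Finset.HasAntidiagonal.mem_antidiagonal] at h ⊢
    omega
  · simp
  · rintro ⟨⟨k, p⟩, l⟩ h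
    simp only [Finset.mem_sigma, Finset.mem_range, Finset.HasAntidiagonal.mem_antidiagonal] at h
    have hlk : k - l + l = k := by omega
    have hlp : p - l + l = p := by omega
    simp only [hlk, hlp]
  · simp

lemma add_pow_div_factorial (x y : K) (m : ℕ) :
    (x + y) ^ m / m ! = ∑ ij ∈ antidiagonal m, x ^ ij.1 / ij.1 ! * (y ^ ij.2 / ij.2 !) := by
  rw [(Commute.all x y).add_pow', Finset.sum_div]
  refine Finset.sum_congr rfl fun ij hij => ?_
  have hm : (m ! : K) ≠ 0 := mod_cast m.factorial_ne_zero
  rw [← Finset.HasAntidiagonal.mem_antidiagonal.1 hij] at hm ⊢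
  rw [nsmul_eq_mul, Nat.cast_add_choose]
  field_simp

lemma gegenbauerMean_add_mul_cos_pow_div_factorial (hω : -(1 / 2) < ω) (a b : ℝ) (m : ℕ) :
    gegenbauerMean ω (fun θ => (a + b * cos θ) ^ m / m !) =
      ∑ l ∈ Finset.range (m / 2 + 1),
        a ^ (m - 2 * l) / (m - 2 * l)! * (besselCoeff ω l * (b ^ 2 / 4) ^ l) := by
  have hexpand (θ : ℝ) : (a + b * cos θ) ^ m / m ! = ∑ j ∈ Finset.range (m + 1),
      b ^ j / j ! * (a ^ (m - j) / (m - j)!) * cos θ ^ j := by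
    rw [add_comm, add_pow_div_factorial, Finset.Nat.sum_antidiagonal_eq_sum_range_succ_mk]
    refine Finset.sum_congr rfl fun j _ => ?_
    ring
  simp_rw [hexpand]
  rw [gegenbauerMean_sum hω _ fun _ _ => by fun_prop]
  simp_rw [gegenbauerMean_const_mul]
  rw [sum_range_eq_sum_even m fun j hj => by rw [gegenbauerMean_cos_pow_of_odd ω hj, mul_zero]]
  refine Finset.sum_congr rfl fun l _ => ?_
  rw [gegenbauerMean_cos_pow hω, pow_mul, div_pow]
  field_simp

lemma besselCoeff_mul_gegenbauerMean_pow (hω : -(1 / 2) < ω) (x y : ℝ) (m : ℕ) :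
    besselCoeff ω m * gegenbauerMean ω (fun θ => (x ^ 2 + y ^ 2 - 2 * x * y * cos θ) ^ m) =
      ∑ kp ∈ antidiagonal m,
        besselCoeff ω kp.1 * (x ^ 2) ^ kp.1 * (besselCoeff ω kp.2 * (y ^ 2) ^ kp.2) := by
  have hsplit (l : ℕ) : (x ^ 2 + y ^ 2) ^ (m - 2 * l) / (m - 2 * l)! *
      (besselCoeff ω l * ((-(2 * x * y)) ^ 2 / 4) ^ l) = ∑ ij ∈ antidiagonal (m - 2 * l),
        (x ^ 2) ^ (ij.1 + l) * (y ^ 2) ^ (ij.2 + l) * (besselCoeff ω l / (ij.1 ! * ij.2 !)) := by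
    rw [add_pow_div_factorial, Finset.sum_mul]
    refine Finset.sum_congr rfl fun ij _ => ?_
    rw [show (-(2 * x * y)) ^ 2 / 4 = x ^ 2 * y ^ 2 by ring, mul_pow, pow_add, pow_add]
    field_simp
  calc besselCoeff ω m * gegenbauerMean ω (fun θ => (x ^ 2 + y ^ 2 - 2 * x * y * cos θ) ^ m)
      = m ! * besselCoeff ω m * gegenbauerMean ω
          (fun θ => (x ^ 2 + y ^ 2 + -(2 * x * y) * cos θ) ^ m / m !) := by
        simp only [div_eq_inv_mul, gegenbauerMean_const_mul, neg_mul, ← sub_eq_add_neg]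
        field_simp
    _ = ∑ kp ∈ antidiagonal m, m ! * besselCoeff ω m *
          ∑ l ∈ Finset.range (min kp.1 kp.2 + 1), (x ^ 2) ^ (kp.1 - l + l) *
            (y ^ 2) ^ (kp.2 - l + l) * (besselCoeff ω l / ((kp.1 - l)! * (kp.2 - l)!)) := by
        simp_rw [gegenbauerMean_add_mul_cos_pow_div_factorial hω, hsplit]
        rw [sum_range_sum_antidiagonal_eq_sum_antidiagonal_sum_range_min m fun i j l =>
          (x ^ 2) ^ (i + l) * (y ^ 2) ^ (j + l) * (besselCoeff ω l / (i ! * j !)), Finset.mul_sum]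
    _ = ∑ kp ∈ antidiagonal m,
          besselCoeff ω kp.1 * (x ^ 2) ^ kp.1 * (besselCoeff ω kp.2 * (y ^ 2) ^ kp.2) := by
        refine Finset.sum_congr rfl fun kp hkp => ?_
        rw [mul_mul_mul_comm, besselCoeff_mul_besselCoeff (by linarith),
          Finset.HasAntidiagonal.mem_antidiagonal.1 hkp, mul_assoc _ _ ((x ^ 2) ^ kp.1 * _),
          Finset.sum_mul]
        congr 1
        refine Finset.sum_congr rfl fun l hl => ?_
        rw [Finset.mem_range] at hl
        rw [Nat.sub_add_cancel (by omega), Nat.sub_add_cancel (by omega), mul_comm]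

lemma sq_add_sq_sub_mul_cos_nonneg (x y θ : ℝ) : 0 ≤ x ^ 2 + y ^ 2 - 2 * x * y * cos θ := by
  nlinarith [sq_nonneg (x - y * cos θ), sq_nonneg (y * sin θ), sin_sq_add_cos_sq θ]

lemma sq_add_sq_sub_mul_cos_le (x y θ : ℝ) :
    x ^ 2 + y ^ 2 - 2 * x * y * cos θ ≤ (|x| + |y|) ^ 2 := by
  have hxy : -(x * y * cos θ) ≤ |x| * |y| := by
    refine (neg_le_abs _).trans ?_
    rw [abs_mul, abs_mul]
    exact mul_le_of_le_one_right (by positivity) (abs_cos_le_one θ)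
  nlinarith [sq_abs x, sq_abs y]

theorem gegenbauerMean_normBessel (hω : -(1 / 2) < ω) (x y s : ℝ) :
    gegenbauerMean ω (fun θ => normBessel ω (√(x ^ 2 + y ^ 2 - 2 * x * y * cos θ) * s)) =
      normBessel ω (x * s) * normBessel ω (y * s) := by
  set Q : ℝ → ℝ := fun θ => x ^ 2 + y ^ 2 - 2 * x * y * cos θ
  set t : ℝ := -(s ^ 2 / 4) with ht
  have hQ_nonneg (θ : ℝ) : 0 ≤ Q θ := sq_add_sq_sub_mul_cos_nonneg x y θ
  have hseries (u : ℝ) : HasSum (fun k => besselCoeff ω k * (u ^ 2 * t) ^ k)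
      (normBessel ω (u * s)) := by
    convert hasSum_normBessel hω (u * s) using 4
    rw [ht]
    ring
  have hmean : HasSum (fun m => gegenbauerMean ω fun θ => besselCoeff ω m * (Q θ * t) ^ m)
      (gegenbauerMean ω fun θ => normBessel ω (√(Q θ) * s)) := by
    refine hasSum_gegenbauerMean hω (fun m => by fun_prop) (fun m θ => ?_)
      (summable_norm_besselCoeff_mul_pow hω ((|x| + |y|) ^ 2 * t)) fun θ => ?_
    · rw [abs_mul, abs_pow, abs_mul, norm_mul, norm_pow, norm_mul, norm_eq_abs, norm_eq_abs,
        norm_eq_abs, abs_of_nonneg (hQ_nonneg θ), abs_sq]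
      have := hQ_nonneg θ
      gcongr
      exact sq_add_sq_sub_mul_cos_le x y θ
    · simpa only [sq_sqrt (hQ_nonneg θ)] using hseries √(Q θ)
  rw [← hmean.tsum_eq, ← (hseries x).tsum_eq, ← (hseries y).tsum_eq,
    tsum_mul_tsum_eq_tsum_sum_antidiagonal_of_summable_norm (hseries x).summable.norm
      (hseries y).summable.norm]
  refine tsum_congr fun m => ?_
  have hpull : (fun θ => besselCoeff ω m * (Q θ * t) ^ m) =
      fun θ => besselCoeff ω m * t ^ m * Q θ ^ m := by
    funext θ
    rw [mul_pow]
    ring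
  rw [hpull, gegenbauerMean_const_mul, mul_right_comm, besselCoeff_mul_gegenbauerMean_pow hω,
    Finset.sum_mul]
  refine Finset.sum_congr rfl fun kp hkp => ?_
  rw [← Finset.HasAntidiagonal.mem_antidiagonal.1 hkp, pow_add, mul_pow, mul_pow]
  ring

end ProductFormula

section PolarCoordinates

variable {E : Type*} [NormedAddCommGroup E] [NormedSpace ℝ E] [FiniteDimensional ℝ E]
  [MeasurableSpace E] [BorelSpace E] [Nontrivial E] (μ : Measure E) [μ.IsAddHaarMeasure]

lemma integral_volumeIoiPow (m : ℕ) (f : ℝ → ℝ) :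
    ∫ r, f r ∂Measure.volumeIoiPow m = ∫ r in Ioi 0, r ^ m * f r := by
  simp only [Measure.volumeIoiPow, ENNReal.ofReal]
  rw [integral_withDensity_eq_integral_smul (measurable_subtype_coe.pow_const m).real_toNNReal,
    integral_subtype_comap measurableSet_Ioi fun r : ℝ => (r ^ m).toNNReal • f r]
  refine setIntegral_congr_fun measurableSet_Ioi fun r hr => ?_
  rw [mem_Ioi] at hr
  simp only [NNReal.smul_def, coe_toNNReal _ (pow_nonneg hr.le m), smul_eq_mul]

lemma integral_eq_integral_toSphere_prod_volumeIoiPow (f : E → ℝ) :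
    ∫ z, f z ∂μ = ∫ p : sphere (0 : E) 1 × Ioi (0 : ℝ), f (p.2.1 • p.1.1)
      ∂μ.toSphere.prod (.volumeIoiPow (Module.finrank ℝ E - 1)) := calc
  ∫ z, f z ∂μ = ∫ z : ({0}ᶜ : Set E), f z ∂μ.comap (↑) := by
    rw [integral_subtype_comap (measurableSet_singleton _).compl, restrict_compl_singleton]
  _ = _ := by
    rw [← μ.measurePreserving_homeomorphUnitSphereProd.integral_comp
      (Homeomorph.measurableEmbedding _)]
    refine integral_congr_ae (ae_of_all _ fun z => ?_)
    have : ‖(z : E)‖ ≠ 0 := norm_ne_zero_iff.2 z.2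
    simp [smul_smul, this]

lemma integral_mul_comp_norm_of_homogeneous {d : ℝ} {f : E → ℝ}
    (hf : ∀ r : ℝ, 0 < r → ∀ z, f (r • z) = r ^ d * f z) (g : ℝ → ℝ) :
    ∫ z, f z * g ‖z‖ ∂μ =
      (∫ y, f y ∂μ.toSphere) * ∫ r in Ioi 0, r ^ (Module.finrank ℝ E - 1 + d) * g r := calc
  _ = ∫ p : sphere (0 : E) 1 × Ioi (0 : ℝ), f p.1 * (p.2.1 ^ d * g p.2)
        ∂μ.toSphere.prod (.volumeIoiPow (Module.finrank ℝ E - 1)) := by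
    rw [integral_eq_integral_toSphere_prod_volumeIoiPow]
    refine integral_congr_ae (ae_of_all _ fun p => ?_)
    have hr : 0 < p.2.1 := p.2.2
    simp only [hf _ hr, norm_smul, norm_of_nonneg hr.le, norm_eq_of_mem_sphere, mul_one]
    ring
  _ = (∫ y, f y ∂μ.toSphere) * ∫ r in Ioi 0, r ^ (Module.finrank ℝ E - 1) * (r ^ d * g r) := by
    rw [integral_prod_mul (fun y : sphere (0 : E) 1 => f y) fun r : Ioi (0 : ℝ) => r.1 ^ d * g r,
      integral_volumeIoiPow _ fun r => r ^ d * g r]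
  _ = _ := by
    congr 1
    refine setIntegral_congr_fun measurableSet_Ioi fun r hr => ?_
    rw [mem_Ioi] at hr
    simp only [rpow_add hr, ← Nat.cast_pred (R := ℝ) (Module.finrank_pos (R := ℝ) (M := E)),
      rpow_natCast, mul_assoc]

end PolarCoordinates

section DirichletIntegral

variable {n : ℕ} {b γ : Fin n → ℝ}

/-- The monomial `z ↦ ∏ i, z i ^ b i` on the open positive orthant, extended by `0` to the whole
space. Cutting off each factor separately makes it a product of functions of one variable. -/
def orthantRpow (b : Fin n → ℝ) (z : EuclideanSpace ℝ (Fin n)) : ℝ :=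
  ∏ i, (Ioi (0 : ℝ)).indicator (· ^ b i) (z i)

lemma orthantRpow_smul (b : Fin n → ℝ) {r : ℝ} (hr : 0 < r) (z : EuclideanSpace ℝ (Fin n)) :
    orthantRpow b (r • z) = r ^ (∑ i, b i) * orthantRpow b z := by
  rw [rpow_sum_of_pos hr, orthantRpow, orthantRpow, ← Finset.prod_mul_distrib]
  refine Finset.prod_congr rfl fun i _ => ?_
  by_cases hz : 0 < z i
  · simp [hz, hr, mul_rpow hr.le hz.le]
  · simp [hz, hr]

lemma orthantRpow_coe_sphere (b : Fin n → ℝ) (y : sphere (0 : EuclideanSpace ℝ (Fin n)) 1) :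
    orthantRpow b y = (sphPos n).indicator (fun y => ∏ i, y.1 i ^ b i) y := by
  by_cases hy : y ∈ sphPos n
  · rw [indicator_of_mem hy]
    exact Finset.prod_congr rfl fun i _ => indicator_of_mem (hy i) _
  · rw [indicator_of_notMem hy]
    simp only [sphPos, mem_ofPred_eq, not_forall] at hy
    obtain ⟨i, hi⟩ := hy
    exact Finset.prod_eq_zero (Finset.mem_univ i) (indicator_of_notMem hi _)

lemma integral_orthantRpow_mul_exp_neg_norm_rpow_two (hb : ∀ i, -1 < b i) :
    ∫ z, orthantRpow b z * exp (-‖z‖ ^ (2 : ℝ)) = ∏ i, Gamma ((b i + 1) / 2) / 2 := calc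
  _ = ∫ z : EuclideanSpace ℝ (Fin n),
        ∏ i, (Ioi (0 : ℝ)).indicator (fun t => t ^ b i * exp (-t ^ (2 : ℝ))) (z i) := by
    refine integral_congr_ae (ae_of_all _ fun z => ?_)
    simp only [orthantRpow, indicator_mul_left, rpow_two, EuclideanSpace.norm_sq_eq,
      norm_eq_abs, sq_abs, ← Finset.sum_neg_distrib, exp_sum, Finset.prod_mul_distrib]
  _ = ∏ i, ∫ t in Ioi 0, t ^ b i * exp (-t ^ (2 : ℝ)) := by
    rw [(PiLp.volume_preserving_ofLp (Fin n)).integral_comp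
      (MeasurableEquiv.toLp 2 (Fin n → ℝ)).symm.measurableEmbedding
      fun z => ∏ i, (Ioi (0 : ℝ)).indicator (fun t => t ^ b i * exp (-t ^ (2 : ℝ))) (z i),
      integral_fintype_prod_volume_eq_prod]
    simp only [integral_indicator measurableSet_Ioi]
  _ = _ := Finset.prod_congr rfl fun i _ => by
    rw [integral_rpow_mul_exp_neg_rpow two_pos (hb i), one_div_mul_eq_div]

lemma measurableSet_sphPos (n : ℕ) : MeasurableSet (sphPos n) := by
  rw [sphPos, ofPred_forall]
  exact .iInter fun i => measurableSet_lt measurable_const (by fun_prop)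

lemma neg_natCast_lt_sum [NeZero n] (hb : ∀ i, -1 < b i) : -(n : ℝ) < ∑ i, b i := by
  simpa using Finset.sum_lt_sum_of_nonempty Finset.univ_nonempty fun i _ => hb i

lemma integral_sphPos_prod_rpow [NeZero n] (hb : ∀ i, -1 < b i) :
    ∫ y in sphPos n, ∏ i, y.1 i ^ b i ∂sphMeasure n =
      2 * (∏ i, Gamma ((b i + 1) / 2) / 2) / Gamma ((n + ∑ i, b i) / 2) := by
  have hdeg := neg_natCast_lt_sum hb
  have hpolar := integral_mul_comp_norm_of_homogeneous volume
    (fun r hr z => orthantRpow_smul b hr z) fun r => exp (-r ^ (2 : ℝ))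
  rw [integral_orthantRpow_mul_exp_neg_norm_rpow_two hb, finrank_euclideanSpace_fin,
    integral_rpow_mul_exp_neg_rpow two_pos (by linarith)] at hpolar
  simp only [orthantRpow_coe_sphere, integral_indicator (measurableSet_sphPos n)] at hpolar
  rw [hpolar, ← sphMeasure, show (n : ℝ) - 1 + ∑ i, b i + 1 = n + ∑ i, b i by ring]
  have : Gamma ((n + ∑ i, b i) / 2) ≠ 0 := (Gamma_pos_of_pos (by linarith)).ne'
  field_simp

lemma sphConst_pos [NeZero n] (hγ : ∀ i, -1 < γ i) : 0 < sphConst n γ := by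
  have hdeg := neg_natCast_lt_sum hγ
  rw [sphConst, integral_sphPos_prod_rpow hγ]
  have hden : 0 < Gamma ((n + ∑ i, γ i) / 2) := Gamma_pos_of_pos (by linarith)
  have hnum : 0 < ∏ i, Gamma ((γ i + 1) / 2) / 2 :=
    Finset.prod_pos fun i _ => half_pos (Gamma_pos_of_pos (by linarith [hγ i]))
  positivity

end DirichletIntegral

section ProductSeries

lemma summable_norm_prod {R : Type*} [NormedCommRing R] {n : ℕ} {κ : Fin n → Type*}
    {f : ∀ i, κ i → R} (hf : ∀ i, Summable fun j => ‖f i j‖) :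
    Summable fun k : ∀ i, κ i => ‖∏ i, f i (k i)‖ := by
  induction n with
  | zero => exact (hasSum_unique _).summable
  | succ n ih =>
    rw [← (Fin.consEquiv κ).summable_iff]
    simpa [Function.comp_def, Fin.prod_univ_succ] using (hf 0).mul_norm (ih fun i => hf i.succ)

lemma hasSum_prod {R : Type*} [NormedCommRing R] [CompleteSpace R] {n : ℕ} {κ : Fin n → Type*}
    {f : ∀ i, κ i → R} {s : Fin n → R} (hf : ∀ i, Summable fun j => ‖f i j‖)
    (hs : ∀ i, HasSum (f i) (s i)) :
    HasSum (fun k : ∀ i, κ i => ∏ i, f i (k i)) (∏ i, s i) := by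
  induction n with
  | zero => simp
  | succ n ih =>
    have htail := ih (fun i => hf i.succ) fun i => hs i.succ
    have hsummable :=
      summable_mul_of_summable_norm (hf 0) (summable_norm_prod fun i => hf i.succ)
    rw [← (Fin.consEquiv κ).hasSum_iff]
    simpa [Function.comp_def, Fin.prod_univ_succ] using (hs 0).mul htail hsummable

lemma hasSum_sum_piAntidiag {ι M : Type*} [Fintype ι] [DecidableEq ι] [AddCommMonoid M]
    [TopologicalSpace M] [ContinuousAdd M] [T3Space M] {f : (ι → ℕ) → M} {s : M}
    (hf : HasSum f s) :
    HasSum (fun m => ∑ k ∈ Finset.piAntidiag Finset.univ m, f k) s := by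
  refine ((Equiv.sigmaFiberEquiv fun k : ι → ℕ => ∑ i, k i).hasSum_iff.2 hf).sigma fun m => ?_
  have hfiber : {k : ι → ℕ | ∑ i, k i = m} =
      (Finset.piAntidiag Finset.univ m : Finset (ι → ℕ)) := by
    ext k
    simp
  have hsum : HasSum (fun k : {k : ι → ℕ | ∑ i, k i = m} => f k)
      (∑ k ∈ Finset.piAntidiag Finset.univ m, f k) := by
    rw [hfiber]
    exact Finset.hasSum _ f
  exact hsum

end ProductSeries

section BesselKernel

variable {n : ℕ} {γ : Fin n → ℝ}

lemma multiT_prod (γ : Fin n → ℝ) (f : Fin n → ℝ → ℝ) (x y : Fin n → ℝ) :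
    multiT n γ (fun z => ∏ i, f i (z i)) x y = ∏ i, gegenbauerMean ((γ i - 1) / 2)
      fun θ => f i √(x i ^ 2 + y i ^ 2 - 2 * x i * y i * cos θ) := by
  simp_rw [multiT, ← Finset.prod_mul_distrib]
  rw [volume_pi, Measure.restrict_pi_pi, integral_fintype_prod_eq_prod
    (f := fun i θ => f i √(x i ^ 2 + y i ^ 2 - 2 * x i * y i * cos θ) * sin θ ^ (γ i - 1)),
    ← Finset.prod_mul_distrib]
  refine Finset.prod_congr rfl fun i _ => ?_
  rw [gegenbauerMean, intervalIntegral.integral_of_le pi_pos.le,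
    show (γ i - 1) / 2 + 1 = (γ i + 1) / 2 by ring,
    show (γ i - 1) / 2 + 1 / 2 = γ i / 2 by ring, mul_div_cancel₀ _ two_ne_zero]

theorem multiT_besselKernel (hγ : ∀ i, 0 < γ i) (ξ x y : Fin n → ℝ) :
    multiT n γ (fun z => besselKernel n γ z ξ) x y =
      besselKernel n γ x ξ * besselKernel n γ y ξ := by
  simp only [besselKernel]
  rw [multiT_prod γ fun i t => normBessel ((γ i - 1) / 2) (t * ξ i), ← Finset.prod_mul_distrib]
  exact Finset.prod_congr rfl fun i _ =>
    gegenbauerMean_normBessel (by linarith [hγ i]) (x i) (y i) (ξ i)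

lemma hasSum_besselKernel (hγ : ∀ i, 0 < γ i) (x ξ : Fin n → ℝ) :
    HasSum (fun k : Fin n → ℕ =>
      ∏ i, besselCoeff ((γ i - 1) / 2) (k i) * (-((x i * ξ i) ^ 2 / 4)) ^ k i)
      (besselKernel n γ x ξ) :=
  hasSum_prod (f := fun i j => besselCoeff ((γ i - 1) / 2) j * (-((x i * ξ i) ^ 2 / 4)) ^ j)
    (fun i => summable_norm_besselCoeff_mul_pow (by linarith [hγ i]) _)
    fun i => hasSum_normBessel (by linarith [hγ i]) _

lemma integrableOn_sphPos_prod_rpow [NeZero n] (hγ : ∀ i, -1 < γ i) :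
    IntegrableOn (fun y => ∏ i, y.1 i ^ γ i) (sphPos n) (sphMeasure n) :=
  not_imp_comm.1 integral_undef (sphConst_pos hγ).ne'

lemma hasSum_integral_sphPos_besselKernel [NeZero n] (hγ : ∀ i, 0 < γ i) (ξ : Fin n → ℝ) (r : ℝ) :
    HasSum (fun k : Fin n → ℕ => ∫ y in sphPos n,
        (∏ i, besselCoeff ((γ i - 1) / 2) (k i) * (-((r * y.1 i * ξ i) ^ 2 / 4)) ^ k i) *
          ∏ i, y.1 i ^ γ i ∂sphMeasure n)
      (∫ y in sphPos n, besselKernel n γ (fun i => r * y.1 i) ξ * ∏ i, y.1 i ^ γ i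
        ∂sphMeasure n) := by
  refine hasSum_integral_mul_of_norm_le (fun k => by fun_prop)
    (fun k => ae_of_all _ fun y => ?_)
    (summable_norm_prod fun i => summable_norm_besselCoeff_mul_pow
      (show -(1 / 2) < (γ i - 1) / 2 by linarith [hγ i]) ((r * ξ i) ^ 2 / 4))
    (integrableOn_sphPos_prod_rpow fun i => by linarith [hγ i])
    (ae_of_all _ fun y => hasSum_besselKernel hγ _ ξ)
  simp only [norm_prod, norm_mul, norm_pow, norm_neg]
  gcongr with i
  have hy : ‖y.1 i‖ ≤ 1 := (PiLp.norm_apply_le y.1 i).trans_eq (norm_eq_of_mem_sphere y)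
  rw [show (r * y.1 i * ξ i) ^ 2 / 4 = (r * ξ i) ^ 2 / 4 * y.1 i ^ 2 by ring, norm_mul, norm_pow]
  exact mul_le_of_le_one_right (norm_nonneg _) (pow_le_one₀ (norm_nonneg _) hy)

lemma prod_besselCoeff_mul_integral_sphPos [NeZero n] (hγ : ∀ i, -1 < γ i) (k : Fin n → ℕ) :
    (∏ i, besselCoeff ((γ i - 1) / 2) (k i)) *
        ∫ y in sphPos n, ∏ i, y.1 i ^ (γ i + 2 * k i) ∂sphMeasure n =
      sphConst n γ * (besselCoeff ((n + ∑ i, γ i - 2) / 2) (∑ i, k i) *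
        Nat.multinomial Finset.univ k) := by
  have hdeg := neg_natCast_lt_sum hγ
  have hprod : (∏ i, besselCoeff ((γ i - 1) / 2) (k i)) *
      ∏ i, Gamma ((γ i + 2 * k i + 1) / 2) / 2 =
      (∏ i, Gamma ((γ i + 1) / 2) / 2) / ∏ i, ((k i)! : ℝ) := by
    rw [← Finset.prod_mul_distrib, ← Finset.prod_div_distrib]
    refine Finset.prod_congr rfl fun i _ => ?_
    rw [show (γ i + 2 * k i + 1) / 2 = (γ i - 1) / 2 + 1 + k i by ring, ← mul_div_assoc,
      besselCoeff_mul_Gamma (by linarith [hγ i]), show (γ i - 1) / 2 + 1 = (γ i + 1) / 2 by ring]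
    ring
  have hmultinomial : (∏ i, ((k i)! : ℝ)) * Nat.multinomial Finset.univ k = (∑ i, k i)! :=
    mod_cast Nat.multinomial_spec Finset.univ k
  have hsum : (n + ∑ i, (γ i + 2 * k i)) / 2 =
      (n + ∑ i, γ i - 2) / 2 + 1 + (∑ i, k i : ℕ) := by
    rw [Finset.sum_add_distrib, ← Finset.mul_sum]
    push_cast
    ring
  rw [sphConst, integral_sphPos_prod_rpow hγ, integral_sphPos_prod_rpow fun i => by
    linarith [hγ i, (k i).cast_nonneg (α := ℝ)], hsum,
    mul_div_assoc', mul_left_comm, hprod, besselCoeff, ← hmultinomial,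
    show (n + ∑ i, γ i - 2) / 2 + 1 = (n + ∑ i, γ i) / 2 by ring]
  have hΓ : Gamma ((n + ∑ i, γ i) / 2) ≠ 0 := (Gamma_pos_of_pos (by linarith)).ne'
  have hmultinomial_ne : (Nat.multinomial Finset.univ k : ℝ) ≠ 0 :=
    mod_cast (Nat.multinomial_pos _ _).ne'
  generalize Gamma ((n + ∑ i, γ i) / 2) = G at *
  field_simp

lemma integral_sphPos_prod_besselCoeff [NeZero n] (hγ : ∀ i, -1 < γ i) (ξ : Fin n → ℝ) (r : ℝ)
    (k : Fin n → ℕ) :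
    ∫ y in sphPos n,
        (∏ i, besselCoeff ((γ i - 1) / 2) (k i) * (-((r * y.1 i * ξ i) ^ 2 / 4)) ^ k i) *
          ∏ i, y.1 i ^ γ i ∂sphMeasure n =
      sphConst n γ * (besselCoeff ((n + ∑ i, γ i - 2) / 2) (∑ i, k i) *
        (Nat.multinomial Finset.univ k * ∏ i, (-((r * ξ i) ^ 2 / 4)) ^ k i)) := by
  rw [← mul_assoc (besselCoeff _ _), ← mul_assoc (sphConst n γ),
    ← prod_besselCoeff_mul_integral_sphPos hγ, mul_right_comm, ← Finset.prod_mul_distrib,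
    ← integral_const_mul]
  refine setIntegral_congr_fun (measurableSet_sphPos n) fun y hy => ?_
  simp only [← Finset.prod_mul_distrib]
  refine Finset.prod_congr rfl fun i _ => ?_
  rw [rpow_add (hy i), rpow_mul_natCast (hy i).le, rpow_two,
    show -((r * y.1 i * ξ i) ^ 2 / 4) = -((r * ξ i) ^ 2 / 4) * y.1 i ^ 2 by ring, mul_pow]
  ring

theorem integral_sphPos_besselKernel [NeZero n] (hγ : ∀ i, 0 < γ i)
    (ξ : EuclideanSpace ℝ (Fin n)) (r : ℝ) :
    ∫ y in sphPos n, besselKernel n γ (fun i => r * y.1 i) ξ * ∏ i, y.1 i ^ γ i ∂sphMeasure n =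
      sphConst n γ * normBessel ((n + ∑ i, γ i - 2) / 2) (r * ‖ξ‖) := by
  have hγsum : 0 < ∑ i, γ i := Finset.sum_pos (fun i _ => hγ i) Finset.univ_nonempty
  have hn : (1 : ℝ) ≤ n := mod_cast NeZero.one_le
  refine (hasSum_sum_piAntidiag (hasSum_integral_sphPos_besselKernel hγ ξ r)).unique
    (((hasSum_normBessel (by linarith) _).mul_left _).congr_fun fun m => ?_)
  have hnorm : ∑ i, -((r * ξ i) ^ 2 / 4) = -((r * ‖ξ‖) ^ 2 / 4) := by
    simp_rw [Finset.sum_neg_distrib, ← Finset.sum_div, mul_pow, ← Finset.mul_sum,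
      EuclideanSpace.norm_sq_eq, norm_eq_abs, sq_abs]
  rw [← hnorm, Finset.sum_pow_eq_sum_piAntidiag, Finset.mul_sum, Finset.mul_sum]
  refine Finset.sum_congr rfl fun k hk => ?_
  rw [integral_sphPos_prod_besselCoeff fun i => by linarith [hγ i],
    (Finset.mem_piAntidiag.1 hk).1]

lemma multiT_mul_const (γ : Fin n → ℝ) (f : (Fin n → ℝ) → ℝ) (c : ℝ) (x y : Fin n → ℝ) :
    multiT n γ (fun z => f z * c) x y = multiT n γ f x y * c := by
  simp_rw [multiT, mul_right_comm _ c, integral_mul_const, mul_assoc]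

lemma sMean_mul_const (γ : Fin n → ℝ) (f : (Fin n → ℝ) → ℝ) (c : ℝ) (x : Fin n → ℝ) (r : ℝ) :
    sMean n γ (fun z => f z * c) x r = sMean n γ f x r * c := by
  simp_rw [sMean, multiT_mul_const, mul_right_comm _ c, integral_mul_const, mul_assoc]

lemma sMean_besselKernel_eq_mul_normBessel [NeZero n] (hγ : ∀ i, 0 < γ i)
    (ξ : EuclideanSpace ℝ (Fin n)) (x : Fin n → ℝ) (r : ℝ) :
    sMean n γ (fun z => besselKernel n γ z ξ) x r =
      besselKernel n γ x ξ * normBessel ((n + ∑ i, γ i - 2) / 2) (r * ‖ξ‖) := by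
  have hconst : sphConst n γ ≠ 0 := (sphConst_pos fun i => by linarith [hγ i]).ne'
  simp_rw [sMean, multiT_besselKernel hγ, mul_assoc, integral_const_mul,
    integral_sphPos_besselKernel hγ ξ r]
  field_simp

theorem sMean_besselKernel_general [NeZero n] (hγ : ∀ i, 0 < γ i)
    (ξ : EuclideanSpace ℝ (Fin n)) (x : Fin n → ℝ) (lam mu : ℝ) :
    sMean n γ (fun z => besselKernel n γ z ξ) x mu =
        besselKernel n γ x ξ * normBessel ((n + ∑ i, γ i - 2) / 2) (mu * ‖ξ‖) ∧
      iMean n γ (fun z => besselKernel n γ z ξ) x lam mu =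
        besselKernel n γ x ξ * normBessel ((n + ∑ i, γ i - 2) / 2) (mu * ‖ξ‖) *
          normBessel ((n + ∑ i, γ i - 2) / 2) (lam * ‖ξ‖) := by
  refine ⟨sMean_besselKernel_eq_mul_normBessel hγ ξ x mu, ?_⟩
  simp_rw [iMean, sMean_besselKernel_eq_mul_normBessel hγ, sMean_mul_const,
    sMean_besselKernel_eq_mul_normBessel hγ]
  ring

end BesselKernel

/-- The weighted spherical mean of the Bessel kernel is a Bessel multiplier:
`M_μ^γ 𝐣_γ(·, ξ) = 𝐣_γ(x, ξ) j_{(n+|γ|−2)/2}(μ)`, and consequently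
`I_{λ,μ}^γ 𝐣_γ(·, ξ) = 𝐣_γ(x, ξ) j_{(n+|γ|−2)/2}(μ) j_{(n+|γ|−2)/2}(λ)`. -/
theorem sMean_besselKernel (n : ℕ) (hn : 1 ≤ n) (γ : Fin n → ℝ) (hγ : ∀ i, 0 < γ i)
    (ξ : EuclideanSpace ℝ (Fin n)) (hξ : ‖ξ‖ = 1)
    (x : Fin n → ℝ) (lam mu : ℝ) (hlam : 0 < lam) (hmu : 0 < mu) :
    sMean n γ (fun z => besselKernel n γ z ξ) x mu =
        besselKernel n γ x ξ * normBessel (((n : ℝ) + (∑ i, γ i) - 2) / 2) mu ∧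
      iMean n γ (fun z => besselKernel n γ z ξ) x lam mu =
        besselKernel n γ x ξ * normBessel (((n : ℝ) + (∑ i, γ i) - 2) / 2) mu *
          normBessel (((n : ℝ) + (∑ i, γ i) - 2) / 2) lam := by
  have : NeZero n := ⟨Nat.one_le_iff_ne_zero.1 hn⟩
  simpa [hξ] using sMean_besselKernel_general hγ ξ x lam mu
end
end
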